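/- Suppose the family F of metrics satisfies the local log-Lipschitz condition (L) and h satisfies the time-Lipschitz condition (H). Then the generalized Lorentzian product hI×_F X satisfies the push-up property: for all p, q, r ∈ I×X, if (p ≤ q and q ≪ r) or (p ≪ q and q ≤ r), then p ≪ r. -/

import Mathlib

open Filter MeasureTheory Set Topology
open scoped ENNReal NNReal

noncomputable section

/-- The metric speed of a curve `β` at time `t` w.r.t. a distance function `dist`. -/
def mSpeed {X : Type*} (dst : X → X → ℝ) (β : ℝ → X) (t : ℝ) : ℝ :=
  Filter.limsup (fun e : ℝ => dst (β (t + e)) (β t) / |e|) (nhdsWithin (0 : ℝ) {0}ᶜ)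

/-- The generalized metric speed `v_β(s,t)` of a curve `β` w.r.t. the family of
metrics `d`. -/
def genSpeed {X : Type*} (d : ℝ → X → X → ℝ) (β : ℝ → X) (s t : ℝ) : ℝ :=
  Filter.limsup (fun e : ℝ => (∫ u in t..(t + e), mSpeed (d s) β u) / e)
    (nhdsWithin (0 : ℝ) {0}ᶜ)

/-- Absolute continuity of a curve on `[a,b]` w.r.t. a distance function. -/
def ACOn {X : Type*} (dst : X → X → ℝ) (β : ℝ → X) (a b : ℝ) : Prop :=
  ∃ g : ℝ → ℝ, MeasureTheory.IntegrableOn g (Set.Icc a b) ∧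
    ∀ ⦃t u : ℝ⦄, t ∈ Set.Icc a b → u ∈ Set.Icc a b → t ≤ u →
      dst (β t) (β u) ≤ ∫ r in t..u, g r

/-- The standard distance on `ℝ`. -/
def rdist : ℝ → ℝ → ℝ := fun x y => |x - y|

/-- `d` is a family of metrics on `X` indexed by `s ∈ I`, each generating the
topology of `X`. -/
def IsMetricFamily {X : Type*} [TopologicalSpace X] (I : Set ℝ) (d : ℝ → X → X → ℝ) : Prop :=
  ∀ s ∈ I,
    (∀ x : X, d s x x = 0) ∧ (∀ x y : X, x ≠ y → 0 < d s x y) ∧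
    (∀ x y : X, d s x y = d s y x) ∧ (∀ x y z : X, d s x z ≤ d s x y + d s y z) ∧
    (∀ x : X, (nhds x).HasBasis (fun ε : ℝ => 0 < ε) (fun ε => {y | d s x y < ε}))

/-- Condition (C): local uniform continuity of `s ↦ d_s` in a logarithmic sense. -/
def CondC {X : Type*} [TopologicalSpace X] (I : Set ℝ) (d : ℝ → X → X → ℝ) : Prop :=
  ∀ J : Set ℝ, ∀ K : Set X, J ⊆ I → IsCompact J → IsCompact K →
    ∃ r > (0 : ℝ), ∃ ω : ℝ → ℝ, ω 0 = 0 ∧ Monotone ω ∧ ContinuousAt ω 0 ∧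
      ∀ s ∈ J, ∀ s' ∈ J, ∀ x ∈ K, ∀ y ∈ K, x ≠ y →
        sInf ((fun u => d u x y) '' J) < r →
        |Real.log (d s x y / d s' x y)| ≤ ω |s - s'|

/-- Condition (L): local log-Lipschitz dependence of `d_s` on `s`. -/
def CondL {X : Type*} [TopologicalSpace X] (I : Set ℝ) (d : ℝ → X → X → ℝ) : Prop :=
  ∀ J : Set ℝ, ∀ K : Set X, J ⊆ I → IsCompact J → IsCompact K →
    ∃ C > (0 : ℝ), ∃ r > (0 : ℝ),
      ∀ s ∈ J, ∀ s' ∈ J, ∀ x ∈ K, ∀ y ∈ K, x ≠ y →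
        sInf ((fun u => d u x y) '' J) < r →
        |Real.log (d s x y / d s' x y)| ≤ C * |s - s'|

/-- Condition (H): Lipschitz continuity of `h` in the time variable, locally
uniformly. -/
def CondH {X : Type*} [TopologicalSpace X] (I : Set ℝ) (h : ℝ → X → ℝ) : Prop :=
  ∀ J : Set ℝ, ∀ K : Set X, J ⊆ I → IsCompact J → IsCompact K →
    ∃ C' > (0 : ℝ), ∀ s ∈ J, ∀ s' ∈ J, ∀ x ∈ K, |h s x - h s' x| ≤ C' * |s - s'|

/-- A curve `(α, β) : [a,b] → I × X` with both components absolutely continuous. -/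
def CurveIn {X : Type*} (I : Set ℝ) (d : ℝ → X → X → ℝ) (α : ℝ → ℝ) (β : ℝ → X)
    (a b : ℝ) : Prop :=
  a < b ∧ ACOn rdist α a b ∧ (∀ s ∈ I, ACOn (d s) β a b) ∧ ∀ t ∈ Set.Icc a b, α t ∈ I

/-- Future directed: `α' > 0` a.e. -/
def FutureDirected (α : ℝ → ℝ) (a b : ℝ) : Prop :=
  ∀ᵐ t : ℝ, t ∈ Set.Ioo a b → 0 < deriv α t

/-- Past directed: `α' < 0` a.e. -/
def PastDirected (α : ℝ → ℝ) (a b : ℝ) : Prop :=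
  ∀ᵐ t : ℝ, t ∈ Set.Ioo a b → deriv α t < 0

/-- The causality inequality `v_β(α_t,t)² ≤ h(γ_t)² α'(t)²` a.e. -/
def CausalIneq {X : Type*} (d : ℝ → X → X → ℝ) (h : ℝ → X → ℝ) (α : ℝ → ℝ)
    (β : ℝ → X) (a b : ℝ) : Prop :=
  ∀ᵐ t : ℝ, t ∈ Set.Ioo a b →
    (genSpeed d β (α t) t) ^ 2 ≤ (h (α t) (β t)) ^ 2 * (deriv α t) ^ 2

/-- The timelike inequality `v_β(α_t,t)² < h(γ_t)² α'(t)²` a.e. -/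
def TimelikeIneq {X : Type*} (d : ℝ → X → X → ℝ) (h : ℝ → X → ℝ) (α : ℝ → ℝ)
    (β : ℝ → X) (a b : ℝ) : Prop :=
  ∀ᵐ t : ℝ, t ∈ Set.Ioo a b →
    (genSpeed d β (α t) t) ^ 2 < (h (α t) (β t)) ^ 2 * (deriv α t) ^ 2

/-- Future directed causal curve. -/
def FutureCausal {X : Type*} (I : Set ℝ) (d : ℝ → X → X → ℝ) (h : ℝ → X → ℝ)
    (α : ℝ → ℝ) (β : ℝ → X) (a b : ℝ) : Prop :=
  CurveIn I d α β a b ∧ FutureDirected α a b ∧ CausalIneq d h α β a b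

/-- Future directed timelike curve. -/
def FutureTimelike {X : Type*} (I : Set ℝ) (d : ℝ → X → X → ℝ) (h : ℝ → X → ℝ)
    (α : ℝ → ℝ) (β : ℝ → X) (a b : ℝ) : Prop :=
  CurveIn I d α β a b ∧ FutureDirected α a b ∧ TimelikeIneq d h α β a b

/-- Causal curve (future or past directed). -/
def CausalCurve {X : Type*} (I : Set ℝ) (d : ℝ → X → X → ℝ) (h : ℝ → X → ℝ)
    (α : ℝ → ℝ) (β : ℝ → X) (a b : ℝ) : Prop :=
  CurveIn I d α β a b ∧ (FutureDirected α a b ∨ PastDirected α a b) ∧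
    CausalIneq d h α β a b

/-- The causal relation `p ≤ q` in the generalized Lorentzian product. -/
def causalRel {X : Type*} (I : Set ℝ) (d : ℝ → X → X → ℝ) (h : ℝ → X → ℝ)
    (p q : ℝ × X) : Prop :=
  ∃ a b α β, FutureCausal I d h α β a b ∧
    α a = p.1 ∧ β a = p.2 ∧ α b = q.1 ∧ β b = q.2

/-- The chronological relation `p ≪ q` in the generalized Lorentzian product. -/
def chronRel {X : Type*} (I : Set ℝ) (d : ℝ → X → X → ℝ) (h : ℝ → X → ℝ)
    (p q : ℝ × X) : Prop :=
  ∃ a b α β, FutureTimelike I d h α β a b ∧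
    α a = p.1 ∧ β a = p.2 ∧ α b = q.1 ∧ β b = q.2

/-- The Lorentzian length of a curve. -/
def lorLen {X : Type*} (d : ℝ → X → X → ℝ) (h : ℝ → X → ℝ) (α : ℝ → ℝ) (β : ℝ → X)
    (a b : ℝ) : ℝ :=
  ∫ t in a..b,
    Real.sqrt ((h (α t) (β t)) ^ 2 * (deriv α t) ^ 2 - (genSpeed d β (α t) t) ^ 2)

/-- The time separation function `τ` of the generalized Lorentzian product. -/
def timeSep {X : Type*} (I : Set ℝ) (d : ℝ → X → X → ℝ) (h : ℝ → X → ℝ)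
    (p q : ℝ × X) : ℝ≥0∞ :=
  sSup {l | ∃ a b α β, FutureCausal I d h α β a b ∧
    α a = p.1 ∧ β a = p.2 ∧ α b = q.1 ∧ β b = q.2 ∧
    l = ENNReal.ofReal (lorLen d h α β a b)}

end

open Filter MeasureTheory Set Topology
open scoped ENNReal

/-!
By (L) and (H) the cone opening `v_β(s, t) / h(s, β_t)` changes by a factor at most `e^{L |s - s'|}`
when `s` is replaced by `s'`. Translating the time component `α` of a curve by `y` in the coordinate
`-e^{-κ s} / κ` turns `α'` into `e^{κ δ} (α' + e^{κ α} y')`, where `δ` is the displacement of `α`.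
If `κ = ± L` is chosen so that `κ δ ≥ 0`, the factor `e^{κ δ}` compensates the variation of the
cones. So for `y = ε ∫ f` the deformed curve is timelike as soon as the original one becomes so
after replacing `α'` by `α' + θ f` with `θ = ε e^{κ α}`.

Concatenate a causal and a timelike curve, and take for `f` a positive constant on the causal piece
and minus a positive function below the slack `α' - v_β / h` on the timelike piece, with total
integral `0`. Then the deformation fixes the endpoints, and `y`, hence `δ`, has constant sign.
-/

section Limsup

theorem limsup_nonneg_of_eventually_nonneg {ι : Type*} {l : Filter ι} [l.NeBot] {f : ι → ℝ}
    (hf : ∀ᶠ i in l, 0 ≤ f i) : 0 ≤ limsup f l := by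
  rw [limsup_eq]
  refine Real.sInf_nonneg fun a ha => ?_
  obtain ⟨i, hi, hia⟩ := (hf.and ha).exists
  exact hi.trans hia

-- The limsup of a real function that is not bounded above is `0`, so a one-sided comparison fails.
theorem limsup_le_mul_limsup {ι : Type*} {l : Filter ι} [l.NeBot] {f g : ι → ℝ} {c : ℝ}
    (hc : 0 < c) (hf : ∀ᶠ i in l, 0 ≤ f i) (hfg : ∀ᶠ i in l, f i ≤ c * g i)
    (hgf : ∀ᶠ i in l, g i ≤ c * f i) : limsup f l ≤ c * limsup g l := by
  by_cases hg : ∃ a, ∀ᶠ i in l, g i ≤ a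
  · rw [← div_le_iff₀' hc, limsup_eq (u := g)]
    refine le_csInf hg fun a ha => ?_
    rw [div_le_iff₀' hc]
    refine limsup_le_of_le (isBoundedUnder_of_eventually_ge hf).isCoboundedUnder_le ?_
    filter_upwards [hfg, ha] with i hi hia
    exact hi.trans (mul_le_mul_of_nonneg_left hia hc.le)
  · have hf' : ¬ ∃ a, ∀ᶠ i in l, f i ≤ a := by
      rintro ⟨a, ha⟩
      refine hg ⟨c * a, ?_⟩
      filter_upwards [hgf, ha] with i hi hia
      exact hi.trans (mul_le_mul_of_nonneg_left hia hc.le)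
    have hempty : ∀ u : ι → ℝ, (¬ ∃ a, ∀ᶠ i in l, u i ≤ a) → limsup u l = 0 := fun u hu => by
      rw [limsup_eq, eq_empty_of_forall_notMem (s := {a | ∀ᶠ i in l, u i ≤ a})
        fun a ha => hu ⟨a, ha⟩, Real.sInf_empty]
    rw [hempty f hf', hempty g hg, mul_zero]

theorem limsup_nhdsNE_eq_limsup_nhdsWithin_inter {ι R : Type*} [TopologicalSpace ι] [T1Space ι]
    [ConditionallyCompleteLinearOrder R] [TopologicalSpace R] [OrderClosedTopology R]
    {a : ι} {D : Set ι} (hD : Dense D) {u : ι → R} (hu : ContinuousOn u {a}ᶜ) :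
    limsup u (𝓝[≠] a) = limsup u (𝓝[{a}ᶜ ∩ D] a) := by
  simp only [limsup_eq]
  congr 1 with c
  refine ⟨fun h => nhdsWithin_mono a inter_subset_left h, fun h => ?_⟩
  obtain ⟨U, hU, haU, hUc⟩ := mem_nhdsWithin.1 h
  refine mem_nhdsWithin.2 ⟨U, hU, haU, fun i hi => ?_⟩
  have := mem_closure_iff_nhdsWithin_neBot.1
    (hD.open_subset_closure_inter (hU.inter isOpen_compl_singleton) hi)
  refine le_of_tendsto ((hu i hi.2).mono (s := U ∩ {a}ᶜ ∩ D) fun j hj => hj.1.2) ?_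
  filter_upwards [self_mem_nhdsWithin] with j hj
  exact hUc ⟨hj.1.1, hj.1.2, hj.2⟩

theorem measurable_limsup_nhdsNE {Ω ι R : Type*} [MeasurableSpace Ω] [TopologicalSpace ι]
    [T1Space ι] [FirstCountableTopology ι] [TopologicalSpace.SeparableSpace ι]
    [ConditionallyCompleteLinearOrder R] [TopologicalSpace R] [OrderTopology R]
    [SecondCountableTopology R] [MeasurableSpace R] [BorelSpace R] {a : ι} {F : ι → Ω → R}
    (hF : ∀ i, Measurable (F i)) (hcont : ∀ ω, ContinuousOn (fun i => F i ω) {a}ᶜ) :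
    Measurable fun ω => limsup (fun i => F i ω) (𝓝[≠] a) := by
  obtain ⟨D, hD, hDdense⟩ := TopologicalSpace.exists_countable_dense ι
  obtain ⟨s, hs⟩ := (𝓝 a).exists_antitone_basis
  simp_rw [fun ω => limsup_nhdsNE_eq_limsup_nhdsWithin_inter hDdense (hcont ω)]
  exact Measurable.limsup' hF ⟨hs.toHasBasis.inf_principal _, to_countable _⟩
    fun _ => hD.mono fun _ hi => hi.2.2

end Limsup

section Speed

variable {X : Type*}

theorem tendsto_const_add_nhdsNE_zero (t : ℝ) : Tendsto (fun e : ℝ => t + e) (𝓝[≠] 0) (𝓝 t) := by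
  simpa using (continuous_const_add t).continuousWithinAt (s := {0}ᶜ) (x := 0) |>.tendsto

theorem mSpeed_congr {dst : X → X → ℝ} {β β' : ℝ → X} {t : ℝ} (h : β =ᶠ[𝓝 t] β') :
    mSpeed dst β t = mSpeed dst β' t := by
  refine limsup_congr ?_
  filter_upwards [(tendsto_const_add_nhdsNE_zero t).eventually h] with e he
  rw [he, h.eq_of_nhds]

theorem eventually_forall_mem_uIcc_add {t : ℝ} {P : ℝ → Prop} (h : ∀ᶠ u in 𝓝 t, P u) :
    ∀ᶠ e in 𝓝[≠] (0 : ℝ), ∀ u ∈ uIcc t (t + e), P u := by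
  obtain ⟨ε, hε, hP⟩ := Metric.eventually_nhds_iff_ball.1 h
  filter_upwards [nhdsWithin_le_nhds (Metric.ball_mem_nhds (0 : ℝ) hε)] with e he u hu
  refine hP u (Metric.mem_ball.2 ((abs_sub_left_of_mem_uIcc hu).trans_lt ?_))
  simpa using he

theorem genSpeed_congr {d : ℝ → X → X → ℝ} {β β' : ℝ → X} {s t : ℝ} (h : β =ᶠ[𝓝 t] β') :
    genSpeed d β s t = genSpeed d β' s t := by
  refine limsup_congr ?_
  filter_upwards [eventually_forall_mem_uIcc_add h.eventually_nhds] with e he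
  congr 1
  exact intervalIntegral.integral_congr fun u hu => mSpeed_congr (he u hu)

theorem mSpeed_comp_add_right (dst : X → X → ℝ) (β : ℝ → X) (k t : ℝ) :
    mSpeed dst (fun u => β (u + k)) t = mSpeed dst β (t + k) := by
  simp only [mSpeed, add_right_comm]

theorem genSpeed_comp_add_right (d : ℝ → X → X → ℝ) (β : ℝ → X) (s k t : ℝ) :
    genSpeed d (fun u => β (u + k)) s t = genSpeed d β s (t + k) := by
  simp only [genSpeed, mSpeed_comp_add_right,
    intervalIntegral.integral_comp_add_right (mSpeed (d s) β), add_right_comm]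

theorem mSpeed_nonneg {dst : X → X → ℝ} (h0 : ∀ x y, 0 ≤ dst x y) (β : ℝ → X) (t : ℝ) :
    0 ≤ mSpeed dst β t :=
  limsup_nonneg_of_eventually_nonneg (.of_forall fun _ => div_nonneg (h0 _ _) (abs_nonneg _))

theorem mSpeed_le_mul_mSpeed {dst dst' : X → X → ℝ} {β : ℝ → X} {t c : ℝ} (hc : 0 < c)
    (h0 : ∀ x y, 0 ≤ dst x y) (h : ∀ᶠ u in 𝓝 t, dst (β u) (β t) ≤ c * dst' (β u) (β t))
    (h' : ∀ᶠ u in 𝓝 t, dst' (β u) (β t) ≤ c * dst (β u) (β t)) :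
    mSpeed dst β t ≤ c * mSpeed dst' β t := by
  refine limsup_le_mul_limsup hc
    (.of_forall fun _ => div_nonneg (h0 _ _) (abs_nonneg _)) ?_ ?_
  · filter_upwards [(tendsto_const_add_nhdsNE_zero t).eventually h] with e he
    rw [← mul_div_assoc]
    exact div_le_div_of_nonneg_right he (abs_nonneg e)
  · filter_upwards [(tendsto_const_add_nhdsNE_zero t).eventually h'] with e he
    rw [← mul_div_assoc]
    exact div_le_div_of_nonneg_right he (abs_nonneg e)

theorem integral_add_div_eq_inv_abs_mul_setIntegral_uIoc (f : ℝ → ℝ) (t e : ℝ) :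
    (∫ u in t..(t + e), f u) / e = |e|⁻¹ * ∫ u in uIoc t (t + e), f u := by
  rcases le_or_gt 0 e with he | he
  · rw [intervalIntegral.integral_of_le (by linarith), uIoc_of_le (by linarith), abs_of_nonneg he,
      div_eq_inv_mul]
  · rw [intervalIntegral.integral_of_ge (by linarith), uIoc_of_ge (by linarith), abs_of_neg he,
      inv_neg, neg_mul, div_eq_inv_mul, mul_neg]

theorem integral_add_div_nonneg {f : ℝ → ℝ} (hf : ∀ u, 0 ≤ f u) (t e : ℝ) :
    0 ≤ (∫ u in t..(t + e), f u) / e := by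
  rw [integral_add_div_eq_inv_abs_mul_setIntegral_uIoc]
  exact mul_nonneg (inv_nonneg.2 (abs_nonneg e)) (integral_nonneg hf)

theorem integral_add_div_le_mul {f g : ℝ → ℝ} {t e c : ℝ}
    (hf : IntervalIntegrable f volume t (t + e)) (hg : IntervalIntegrable g volume t (t + e))
    (h : ∀ u, f u ≤ c * g u) :
    (∫ u in t..(t + e), f u) / e ≤ c * ((∫ u in t..(t + e), g u) / e) := by
  rw [intervalIntegrable_iff] at hf hg
  simp only [integral_add_div_eq_inv_abs_mul_setIntegral_uIoc]
  rw [mul_left_comm, ← integral_const_mul c]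
  exact mul_le_mul_of_nonneg_left (integral_mono hf (hg.const_mul c) h)
    (inv_nonneg.2 (abs_nonneg e))

theorem genSpeed_nonneg {d : ℝ → X → X → ℝ} {s : ℝ} (h0 : ∀ x y, 0 ≤ d s x y) (β : ℝ → X)
    (t : ℝ) : 0 ≤ genSpeed d β s t :=
  limsup_nonneg_of_eventually_nonneg
    (.of_forall fun e => integral_add_div_nonneg (mSpeed_nonneg h0 β) t e)

theorem genSpeed_le_mul_genSpeed {d : ℝ → X → X → ℝ} {β : ℝ → X} {s s' c : ℝ} (hc : 0 < c)
    (h0 : ∀ x y, 0 ≤ d s x y)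
    (hi : ∀ x y, IntervalIntegrable (mSpeed (d s) β) volume x y)
    (hi' : ∀ x y, IntervalIntegrable (mSpeed (d s') β) volume x y)
    (h : ∀ u, mSpeed (d s) β u ≤ c * mSpeed (d s') β u)
    (h' : ∀ u, mSpeed (d s') β u ≤ c * mSpeed (d s) β u) (t : ℝ) :
    genSpeed d β s t ≤ c * genSpeed d β s' t :=
  limsup_le_mul_limsup hc
    (.of_forall fun e => integral_add_div_nonneg (mSpeed_nonneg h0 β) t e)
    (.of_forall fun _ => integral_add_div_le_mul (hi _ _) (hi' _ _) h)
    (.of_forall fun _ => integral_add_div_le_mul (hi' _ _) (hi _ _) h')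

theorem measurable_genSpeed {d : ℝ → X → X → ℝ} {β : ℝ → X} {s : ℝ}
    (hi : ∀ x y, IntervalIntegrable (mSpeed (d s) β) volume x y) :
    Measurable (genSpeed d β s) := by
  have hprim := intervalIntegral.continuous_primitive hi 0
  have hsub : ∀ t e : ℝ, ∫ u in t..(t + e), mSpeed (d s) β u =
      (∫ u in (0 : ℝ)..(t + e), mSpeed (d s) β u) - ∫ u in (0 : ℝ)..t, mSpeed (d s) β u :=
    fun t e => (intervalIntegral.integral_interval_sub_left (hi _ _) (hi _ _)).symm
  refine measurable_limsup_nhdsNE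
    (F := fun e t => (∫ u in t..(t + e), mSpeed (d s) β u) / e) (fun e => ?_) fun t => ?_
  · simp only [hsub]
    exact (((hprim.comp (continuous_add_const e)).sub hprim).div_const e).measurable
  · simp only [hsub]
    exact ((hprim.comp (continuous_const_add t)).sub continuous_const).continuousOn.div
      continuousOn_id fun e he => he

end Speed

section AbsolutelyContinuous

variable {Y : Type*} {dst : Y → Y → ℝ} {β : ℝ → Y} {a b : ℝ}

theorem ACOn.exists_le_abs_integral (hsymm : ∀ x y, dst x y = dst y x) (hβ : ACOn dst β a b) :
    ∃ g : ℝ → ℝ, IntegrableOn g (Icc a b) ∧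
      ∀ t ∈ Icc a b, ∀ u ∈ Icc a b, dst (β t) (β u) ≤ |∫ r in t..u, g r| := by
  obtain ⟨g, hg, hβg⟩ := hβ
  refine ⟨g, hg, fun t ht u hu => ?_⟩
  rcases le_total t u with htu | hut
  · exact (hβg ht hu htu).trans (le_abs_self _)
  · rw [hsymm, intervalIntegral.integral_symm, abs_neg]
    exact (hβg hu ht hut).trans (le_abs_self _)

theorem ACOn.continuousOn [TopologicalSpace Y] (hsymm : ∀ x y, dst x y = dst y x)
    (hbasis : ∀ x, (𝓝 x).HasBasis (fun ε : ℝ => 0 < ε) fun ε => {y | dst x y < ε})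
    (hβ : ACOn dst β a b) : ContinuousOn β (Icc a b) := by
  obtain ⟨g, hg, hβg⟩ := hβ.exists_le_abs_integral hsymm
  intro t ht
  have hab : uIcc a b = Icc a b := uIcc_of_le (ht.1.trans ht.2)
  have hint : ∀ u ∈ Icc a b, IntervalIntegrable g volume a u := fun u hu =>
    (intervalIntegrable_iff_integrableOn_Icc_of_le hu.1).2
      (hg.mono_set (Icc_subset_Icc_right hu.2))
  have hprim : ContinuousOn (fun u => ∫ r in t..u, g r) (Icc a b) := by
    refine ContinuousOn.congr (f := fun u => (∫ r in a..u, g r) - ∫ r in a..t, g r) ?_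
      fun u hu => (intervalIntegral.integral_interval_sub_left (hint u hu) (hint t ht)).symm
    rw [← hab] at hg ⊢
    exact (intervalIntegral.continuousOn_primitive_interval hg).sub continuousOn_const
  have hlim : Tendsto (fun u => |∫ r in t..u, g r|) (𝓝[Icc a b] t) (𝓝 0) := by
    simpa using (hprim.abs t ht).tendsto
  refine (hbasis (β t)).tendsto_right_iff.2 fun ε hε => ?_
  filter_upwards [hlim.eventually_lt_const hε, self_mem_nhdsWithin] with u hu hmem
  exact (hβg t ht u hmem).trans_lt hu

theorem ACOn.comp_add_right (hβ : ACOn dst β a b) (k : ℝ) :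
    ACOn dst (fun t => β (t + k)) (a - k) (b - k) := by
  obtain ⟨g, hg, hβg⟩ := hβ
  refine ⟨fun t => g (t + k), ?_, fun t u ht hu htu => ?_⟩
  · have := (measurePreserving_add_right volume k).integrableOn_comp_preimage
      (measurableEmbedding_addRight k) (f := g) (s := Icc a b)
    rw [preimage_add_const_Icc] at this
    exact this.2 hg
  · rw [intervalIntegral.integral_comp_add_right]
    exact hβg ⟨by linarith [ht.1], by linarith [ht.2]⟩ ⟨by linarith [hu.1], by linarith [hu.2]⟩
      (by linarith)

theorem IccExtend_domRestrict_eventuallyEq (hab : a ≤ b) (f : ℝ → Y) {t : ℝ} (ht : t ∈ Ioo a b) :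
    IccExtend hab ((Icc a b).domRestrict f) =ᶠ[𝓝 t] f := by
  filter_upwards [Icc_mem_nhds ht.1 ht.2] with u hu
  rw [IccExtend_of_mem _ _ hu, domRestrict_apply]

theorem ACOn.IccExtend (hab : a ≤ b) (hβ : ACOn dst β a b) (x y : ℝ) :
    ACOn dst (IccExtend hab ((Icc a b).domRestrict β)) x y := by
  obtain ⟨g, hg, hβg⟩ := hβ
  refine ⟨(Ioc a b).indicator g, ((integrable_indicator_iff measurableSet_Ioc).2
    (hg.mono_set Ioc_subset_Icc_self)).integrableOn, fun t u _ _ htu => ?_⟩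
  have hproj : (projIcc a b hab t : ℝ) ≤ projIcc a b hab u := monotone_projIcc hab htu
  have hIoc : Ioc (projIcc a b hab t : ℝ) (projIcc a b hab u) = Ioc t u ∩ Ioc a b := by
    ext r
    simp only [coe_projIcc, mem_Ioc, mem_inter_iff]
    grind
  refine (hβg (projIcc a b hab t).2 (projIcc a b hab u).2 hproj).trans_eq ?_
  rw [intervalIntegral.integral_of_le hproj, intervalIntegral.integral_of_le htu, hIoc,
    setIntegral_indicator measurableSet_Ioc]

end AbsolutelyContinuous

section Piecewise

variable {Y : Type*} {m : ℝ}

theorem piecewise_Iic_eventuallyEq_left (f₁ f₂ : ℝ → Y) {t : ℝ} (ht : t < m) :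
    (Iic m).piecewise f₁ f₂ =ᶠ[𝓝 t] f₁ := by
  filter_upwards [Iic_mem_nhds ht] with u hu using piecewise_eq_of_mem _ _ _ hu

theorem piecewise_Iic_eventuallyEq_right (f₁ f₂ : ℝ → Y) {t : ℝ} (ht : m < t) :
    (Iic m).piecewise f₁ f₂ =ᶠ[𝓝 t] f₂ := by
  filter_upwards [Ioi_mem_nhds ht] with u hu using piecewise_eq_of_notMem _ _ _ (notMem_Iic.2 hu)

theorem integral_piecewise_Iic_left (f₁ f₂ : ℝ → ℝ) {t u : ℝ} (ht : t ≤ m) (hu : u ≤ m) :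
    ∫ r in t..u, (Iic m).piecewise f₁ f₂ r = ∫ r in t..u, f₁ r :=
  intervalIntegral.integral_congr fun _ hr =>
    piecewise_eq_of_mem _ _ _ (hr.2.trans (max_le ht hu))

theorem integral_piecewise_Iic_right (f₁ f₂ : ℝ → ℝ) {t u : ℝ} (ht : m ≤ t) (hu : m ≤ u) :
    ∫ r in t..u, (Iic m).piecewise f₁ f₂ r = ∫ r in t..u, f₂ r :=
  intervalIntegral.integral_congr_uIoo fun _ hr =>
    piecewise_eq_of_notMem _ _ _ (not_le.2 ((le_min ht hu).trans_lt hr.1))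

theorem intervalIntegrable_piecewise_Iic {f₁ f₂ : ℝ → ℝ} {a b : ℝ}
    (ham : a ≤ m) (hmb : m ≤ b) (h₁ : IntervalIntegrable f₁ volume a m)
    (h₂ : IntervalIntegrable f₂ volume m b) :
    IntervalIntegrable ((Iic m).piecewise f₁ f₂) volume a b := by
  refine (h₁.congr fun r hr => ?_).trans (h₂.congr fun r hr => ?_)
  · rw [uIoc_of_le ham] at hr
    exact (piecewise_eq_of_mem (Iic m) _ _ hr.2).symm
  · rw [uIoc_of_le hmb] at hr
    exact (piecewise_eq_of_notMem (Iic m) _ _ (not_le.2 hr.1)).symm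

theorem ACOn.piecewise_Iic {dst : Y → Y → ℝ} (htri : ∀ x y z, dst x z ≤ dst x y + dst y z)
    {β₁ β₂ : ℝ → Y} {a b : ℝ} (h₁ : ACOn dst β₁ a m) (h₂ : ACOn dst β₂ m b)
    (ham : a ≤ m) (hmb : m ≤ b) (hm : β₁ m = β₂ m) :
    ACOn dst ((Iic m).piecewise β₁ β₂) a b := by
  obtain ⟨g₁, hg₁, hβ₁⟩ := h₁
  obtain ⟨g₂, hg₂, hβ₂⟩ := h₂
  have hg := intervalIntegrable_piecewise_Iic ham hmb
    ((intervalIntegrable_iff_integrableOn_Icc_of_le ham).2 hg₁)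
    ((intervalIntegrable_iff_integrableOn_Icc_of_le hmb).2 hg₂)
  refine ⟨(Iic m).piecewise g₁ g₂,
    (intervalIntegrable_iff_integrableOn_Icc_of_le (ham.trans hmb)).1 hg,
    fun t u ht hu htu => ?_⟩
  rcases le_or_gt u m with hum | hmu
  · have htm := htu.trans hum
    rw [piecewise_eq_of_mem (Iic m) _ _ htm, piecewise_eq_of_mem (Iic m) _ _ hum,
      integral_piecewise_Iic_left _ _ htm hum]
    exact hβ₁ ⟨ht.1, htm⟩ ⟨hu.1, hum⟩ htu
  rw [piecewise_eq_of_notMem (Iic m) _ _ (not_le.2 hmu)]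
  rcases lt_or_ge m t with hmt | htm
  · rw [piecewise_eq_of_notMem (Iic m) _ _ (not_le.2 hmt),
      integral_piecewise_Iic_right _ _ hmt.le hmu.le]
    exact hβ₂ ⟨hmt.le, ht.2⟩ ⟨hmu.le, hu.2⟩ htu
  rw [piecewise_eq_of_mem (Iic m) _ _ htm]
  have hsub : ∀ {x y}, x ∈ Icc a b → y ∈ Icc a b →
      IntervalIntegrable ((Iic m).piecewise g₁ g₂) volume x y := fun hx hy =>
    hg.mono_set (uIcc_subset_uIcc (Icc_subset_uIcc hx) (Icc_subset_uIcc hy))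
  calc dst (β₁ t) (β₂ u) ≤ dst (β₁ t) (β₁ m) + dst (β₂ m) (β₂ u) := hm ▸ htri _ _ _
    _ ≤ (∫ r in t..m, g₁ r) + ∫ r in m..u, g₂ r :=
        add_le_add (hβ₁ ⟨ht.1, htm⟩ ⟨ham, le_rfl⟩ htm) (hβ₂ ⟨le_rfl, hmb⟩ ⟨hmu.le, hu.2⟩ hmu.le)
    _ = ∫ r in t..u, (Iic m).piecewise g₁ g₂ r := by
        rw [← intervalIntegral.integral_add_adjacent_intervals (hsub ht ⟨ham, hmb⟩)
          (hsub ⟨ham, hmb⟩ hu), integral_piecewise_Iic_left _ _ htm le_rfl,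
          integral_piecewise_Iic_right _ _ le_rfl hmu.le]

end Piecewise

section RealAbsolutelyContinuous

variable {α α' : ℝ → ℝ} {a b : ℝ}

theorem ACOn.continuousOn_rdist (hα : ACOn rdist α a b) : ContinuousOn α (Icc a b) :=
  hα.continuousOn abs_sub_comm fun x => by
    have hball : ∀ ε, {y | |x - y| < ε} = Metric.ball x ε := fun ε => by
      ext y
      rw [Metric.mem_ball', Real.dist_eq, mem_ofPred_eq]
    simpa only [rdist, hball] using Metric.nhds_basis_ball (x := x)

theorem ACOn.sub (hα : ACOn rdist α a b) (hα' : ACOn rdist α' a b) :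
    ACOn rdist (fun t => α t - α' t) a b := by
  obtain ⟨g, hg, hαg⟩ := hα
  obtain ⟨g', hg', hαg'⟩ := hα'
  refine ⟨fun r => g r + g' r, hg.add hg', fun t u ht hu htu => ?_⟩
  have hsub : Icc t u ⊆ Icc a b := Icc_subset_Icc ht.1 hu.2
  rw [intervalIntegral.integral_add
    ((intervalIntegrable_iff_integrableOn_Icc_of_le htu).2 (hg.mono_set hsub))
    ((intervalIntegrable_iff_integrableOn_Icc_of_le htu).2 (hg'.mono_set hsub))]
  calc |α t - α' t - (α u - α' u)| = |α t - α u - (α' t - α' u)| := by ring_nf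
    _ ≤ |α t - α u| + |α' t - α' u| := abs_sub _ _
    _ ≤ _ := add_le_add (hαg ht hu htu) (hαg' ht hu htu)

theorem ACOn.comp_contDiffOn (hα : ACOn rdist α a b) {φ : ℝ → ℝ}
    (hφ : ContDiffOn ℝ 1 φ (α '' Icc a b)) : ACOn rdist (fun t => φ (α t)) a b := by
  have hconv : Convex ℝ (α '' Icc a b) :=
    (isPreconnected_Icc.image α hα.continuousOn_rdist).ordConnected.convex
  obtain ⟨C, hC⟩ := hφ.exists_lipschitzOnWith one_ne_zero hconv
    (isCompact_Icc.image_of_continuousOn hα.continuousOn_rdist)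
  obtain ⟨g, hg, hαg⟩ := hα
  refine ⟨fun r => C * g r, hg.const_mul _, fun t u ht hu htu => ?_⟩
  rw [intervalIntegral.integral_const_mul]
  exact (hC.dist_le_mul _ (mem_image_of_mem α ht) _ (mem_image_of_mem α hu)).trans
    (mul_le_mul_of_nonneg_left (hαg ht hu htu) C.2)

theorem acOn_rdist_integral {f : ℝ → ℝ} (hf : IntervalIntegrable f volume a b) (hab : a ≤ b) :
    ACOn rdist (fun t => ∫ r in a..t, f r) a b := by
  refine ⟨fun r => |f r|, (intervalIntegrable_iff_integrableOn_Icc_of_le hab).1 hf.abs,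
    fun t u ht hu htu => ?_⟩
  have hsub : ∀ x ∈ Icc a b, IntervalIntegrable f volume a x := fun x hx =>
    hf.mono_set (uIcc_subset_uIcc_left (Icc_subset_uIcc hx))
  rw [rdist, abs_sub_comm, intervalIntegral.integral_interval_sub_left (hsub u hu) (hsub t ht)]
  exact intervalIntegral.abs_integral_le_integral_abs htu

end RealAbsolutelyContinuous

section MetricFamily

variable {X : Type*} [TopologicalSpace X] {I J : Set ℝ} {d : ℝ → X → X → ℝ} {β : ℝ → X}
  {a b s : ℝ}

theorem ACOn.exists_ae_mSpeed_le {Y : Type*} {dst : Y → Y → ℝ} {β : ℝ → Y}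
    (h0 : ∀ x y, 0 ≤ dst x y) (hsymm : ∀ x y, dst x y = dst y x) (hβ : ACOn dst β a b) :
    ∃ g : ℝ → ℝ, IntegrableOn g (Icc a b) ∧
      ∀ᵐ t, t ∈ Ioo a b → mSpeed dst β t ≤ |g t| := by
  obtain ⟨g, hg, hβg⟩ := hβ.exists_le_abs_integral hsymm
  refine ⟨g, hg, ?_⟩
  rcases lt_or_ge b a with hba | hab
  · simp [Ioo_eq_empty_of_le hba.le]
  filter_upwards [((intervalIntegrable_iff_integrableOn_Icc_of_le hab).2 hg).ae_hasDerivAt_integral]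
    with t hderiv ht
  have htIcc := Ioo_subset_Icc_self ht
  have hslope : Tendsto (fun e => |(∫ r in t..(t + e), g r) / e|) (𝓝[≠] 0) (𝓝 |g t|) := by
    have := hasDerivAt_iff_tendsto_slope_zero.1
      (hderiv (Icc_subset_uIcc htIcc) t (Icc_subset_uIcc htIcc))
    simpa only [intervalIntegral.integral_same, sub_zero, smul_eq_mul, ← div_eq_inv_mul]
      using this.abs
  rw [← hslope.limsup_eq]
  refine limsup_le_limsup ?_
    (isBoundedUnder_of_eventually_ge (.of_forall fun _ =>
      div_nonneg (h0 _ _) (abs_nonneg _))).isCoboundedUnder_le hslope.isBoundedUnder_le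
  filter_upwards [(tendsto_const_add_nhdsNE_zero t).eventually (Icc_mem_nhds ht.1 ht.2)] with e he
  rw [hsymm, abs_div]
  exact div_le_div_of_nonneg_right (hβg t htIcc _ he) (abs_nonneg e)

theorem IsMetricFamily.nonneg (hd : IsMetricFamily I d) (hs : s ∈ I) (x y : X) :
    0 ≤ d s x y := by
  obtain ⟨hself, hpos, -⟩ := hd s hs
  rcases eq_or_ne x y with rfl | hxy
  · exact (hself x).ge
  · exact (hpos x y hxy).le

theorem IsMetricFamily.continuous (hd : IsMetricFamily I d) (hs : s ∈ I) :
    Continuous fun z : X × X => d s z.1 z.2 := by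
  obtain ⟨-, -, hsymm, htri, hbasis⟩ := hd s hs
  refine continuous_iff_continuousAt.2 fun ⟨x, y⟩ => Metric.tendsto_nhds.2 fun ε hε => ?_
  filter_upwards [prod_mem_nhds ((hbasis x).mem_of_mem (half_pos hε))
    ((hbasis y).mem_of_mem (half_pos hε))] with z ⟨hx, hy⟩
  rw [mem_ofPred_eq] at hx hy
  rw [Real.dist_eq, abs_lt]
  constructor
  · linarith [htri x z.1 y, htri z.1 z.2 y, hsymm y z.2]
  · linarith [htri z.1 x z.2, htri x y z.2, hsymm x z.1]

theorem IsMetricFamily.continuousOn (hd : IsMetricFamily I d) (hs : s ∈ I)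
    (hβ : ACOn (d s) β a b) : ContinuousOn β (Icc a b) :=
  hβ.continuousOn (hd s hs).2.2.1 (hd s hs).2.2.2.2

theorem IsMetricFamily.continuous_of_acOn (hd : IsMetricFamily I d) (hs : s ∈ I)
    (hβ : ∀ x y, ACOn (d s) β x y) : Continuous β :=
  continuous_iff_continuousAt.2 fun t =>
    (hd.continuousOn hs (hβ (t - 1) (t + 1))).continuousAt
      (Icc_mem_nhds (sub_one_lt t) (lt_add_one t))

theorem IsMetricFamily.intervalIntegrable_mSpeed (hd : IsMetricFamily I d) (hs : s ∈ I)
    (hβ : ∀ x y, ACOn (d s) β x y) (x y : ℝ) :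
    IntervalIntegrable (mSpeed (d s) β) volume x y := by
  have hcont := hd.continuous_of_acOn hs hβ
  have hmeas : Measurable (mSpeed (d s) β) := by
    refine measurable_limsup_nhdsNE (F := fun e t => d s (β (t + e)) (β t) / |e|)
      (fun e => ?_) fun t => ?_
    · exact (((hd.continuous hs).comp
        ((hcont.comp (continuous_add_const e)).prodMk hcont)).div_const _).measurable
    · exact ((hd.continuous hs).comp ((hcont.comp (continuous_const_add t)).prodMk
        continuous_const)).continuousOn.div continuous_abs.continuousOn fun e he => abs_ne_zero.2 he
  obtain ⟨g, hg, hle⟩ :=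
    (hβ (min x y) (max x y)).exists_ae_mSpeed_le (hd.nonneg hs) (hd s hs).2.2.1
  refine (intervalIntegrable_iff.2 (hg.mono_set Ioc_subset_Icc_self)).mono_fun
    hmeas.aestronglyMeasurable ?_
  rw [uIoc, ← restrict_Ioo_eq_restrict_Ioc, EventuallyLE, ae_restrict_iff' measurableSet_Ioo]
  filter_upwards [hle] with t ht htxy
  rw [Real.norm_of_nonneg (mSpeed_nonneg (hd.nonneg hs) β t)]
  exact ht htxy

theorem CondL.exists_dist_le_exp_mul (hL : CondL I d) (hd : IsMetricFamily I d) (hJI : J ⊆ I)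
    (hJ : IsCompact J) {K : Set X} (hK : IsCompact K) :
    ∃ C > 0, ∃ r > 0, ∀ s ∈ J, ∀ s' ∈ J, ∀ x ∈ K, ∀ y ∈ K, d s x y < r →
      d s x y ≤ Real.exp (C * |s - s'|) * d s' x y := by
  obtain ⟨C, hC, r, hr, hlog⟩ := hL J K hJI hJ hK
  refine ⟨C, hC, r, hr, fun s hs s' hs' x hx y hy hxyr => ?_⟩
  rcases eq_or_ne x y with rfl | hxy
  · rw [(hd s (hJI hs)).1, (hd s' (hJI hs')).1, mul_zero]
  have hpos := (hd s (hJI hs)).2.1 x y hxy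
  have hpos' := (hd s' (hJI hs')).2.1 x y hxy
  have hinf : sInf ((fun u => d u x y) '' J) < r :=
    (csInf_le ⟨0, forall_mem_image.2 fun u hu => hd.nonneg (hJI hu) x y⟩
      (mem_image_of_mem _ hs)).trans_lt hxyr
  rw [← div_le_iff₀ hpos', ← Real.log_le_iff_le_exp (div_pos hpos hpos')]
  exact (le_abs_self _).trans (hlog s hs s' hs' x hx y hy hxy hinf)

theorem CondL.exists_genSpeed_le_exp_mul_of_forall_acOn (hL : CondL I d)
    (hd : IsMetricFamily I d) (hJI : J ⊆ I) (hJ : IsCompact J) {K : Set X} (hK : IsCompact K)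
    (hβ : ∀ s ∈ J, ∀ x y, ACOn (d s) β x y) (hβK : ∀ t, β t ∈ K) :
    ∃ C > 0, ∀ s ∈ J, ∀ s' ∈ J, ∀ t,
      genSpeed d β s t ≤ Real.exp (C * |s - s'|) * genSpeed d β s' t := by
  obtain ⟨C, hC, r, hr, hdist⟩ := hL.exists_dist_le_exp_mul hd hJI hJ hK
  refine ⟨C, hC, fun s hs s' hs' t => ?_⟩
  have hnear : ∀ s ∈ J, ∀ s' ∈ J, ∀ u, ∀ᶠ w in 𝓝 u,
      d s (β w) (β u) ≤ Real.exp (C * |s - s'|) * d s' (β w) (β u) := fun s hs s' hs' u => by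
    have hcont : Continuous fun w => d s (β w) (β u) :=
      (hd.continuous (hJI hs)).comp
        ((hd.continuous_of_acOn (hJI hs) (hβ s hs)).prodMk continuous_const)
    filter_upwards [hcont.continuousAt.eventually_lt_const
      (((hd s (hJI hs)).1 (β u)).trans_lt hr)] with w hw
    exact hdist s hs s' hs' _ (hβK w) _ (hβK u) hw
  have hmSpeed : ∀ s ∈ J, ∀ s' ∈ J, ∀ u,
      mSpeed (d s) β u ≤ Real.exp (C * |s - s'|) * mSpeed (d s') β u := fun s hs s' hs' u =>
    mSpeed_le_mul_mSpeed (Real.exp_pos _) (hd.nonneg (hJI hs)) (hnear s hs s' hs' u)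
      (abs_sub_comm s s' ▸ hnear s' hs' s hs u)
  exact genSpeed_le_mul_genSpeed (Real.exp_pos _) (hd.nonneg (hJI hs))
    (hd.intervalIntegrable_mSpeed (hJI hs) (hβ s hs))
    (hd.intervalIntegrable_mSpeed (hJI hs') (hβ s' hs')) (hmSpeed s hs s' hs')
    (abs_sub_comm s s' ▸ hmSpeed s' hs' s hs) t

end MetricFamily

section ConeDistortion

theorem continuousOn_of_le_exp_mul {φ : ℝ → ℝ} {J : Set ℝ} {C : ℝ}
    (hφ : ∀ s ∈ J, ∀ s' ∈ J, φ s ≤ Real.exp (C * |s - s'|) * φ s') : ContinuousOn φ J := by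
  intro s₀ hs₀
  have hlim : ∀ c : ℝ,
      Tendsto (fun s => Real.exp (c * |s - s₀|) * φ s₀) (𝓝[J] s₀) (𝓝 (φ s₀)) := fun c => by
    have : Continuous fun s => Real.exp (c * |s - s₀|) * φ s₀ := by fun_prop
    simpa using this.continuousWithinAt.tendsto (x := s₀) (s := J)
  refine tendsto_of_tendsto_of_tendsto_of_le_of_le' (hlim (-C)) (hlim C) ?_ ?_
  · filter_upwards [self_mem_nhdsWithin] with s hs
    rw [neg_mul, Real.exp_neg, inv_mul_le_iff₀ (Real.exp_pos _), abs_sub_comm]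
    exact hφ s₀ hs₀ s hs
  · filter_upwards [self_mem_nhdsWithin] with s hs using hφ s hs s₀ hs₀

variable {X : Type*} [TopologicalSpace X] {I J : Set ℝ} {d : ℝ → X → X → ℝ} {h : ℝ → X → ℝ}
  {α : ℝ → ℝ} {β : ℝ → X} {a b : ℝ}

theorem CondL.measurable_genSpeed_comp (hL : CondL I d) (hd : IsMetricFamily I d) (hJI : J ⊆ I)
    (hJ : IsCompact J) {K : Set X} (hK : IsCompact K) (hβ : ∀ s ∈ J, ∀ x y, ACOn (d s) β x y)
    (hβK : ∀ t, β t ∈ K) (hα : Measurable α) (hαJ : ∀ t, α t ∈ J) :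
    Measurable fun t => genSpeed d β (α t) t := by
  obtain ⟨C, -, hC⟩ := hL.exists_genSpeed_le_exp_mul_of_forall_acOn hd hJI hJ hK hβ hβK
  have hjoint : Measurable (Function.uncurry fun (s : J) t => genSpeed d β s t) :=
    measurable_uncurry_of_continuous_of_measurable
      (fun t => (continuousOn_of_le_exp_mul fun s hs s' hs' => hC s hs s' hs' t).domRestrict)
      fun s => measurable_genSpeed (hd.intervalIntegrable_mSpeed (hJI s.2) (hβ s s.2))
  have hgraph : Measurable fun t => ((⟨α t, hαJ t⟩, t) : J × ℝ) :=
    hα.subtype_mk.prodMk measurable_id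
  simpa only [Function.comp_def, Function.uncurry_def] using hjoint.comp hgraph

theorem CondL.exists_genSpeed_le_exp_mul (hL : CondL I d) (hd : IsMetricFamily I d) (hJI : J ⊆ I)
    (hJ : IsCompact J) (hab : a ≤ b) (hβ : ∀ s ∈ J, ACOn (d s) β a b)
    (hβc : ContinuousOn β (Icc a b)) :
    ∃ C > 0, ∀ s ∈ J, ∀ s' ∈ J, ∀ t ∈ Ioo a b,
      genSpeed d β s t ≤ Real.exp (C * |s - s'|) * genSpeed d β s' t := by
  obtain ⟨C, hC, hle⟩ := hL.exists_genSpeed_le_exp_mul_of_forall_acOn hd hJI hJ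
    (isCompact_Icc.image_of_continuousOn hβc) (fun s hs => (hβ s hs).IccExtend hab)
    fun t => mem_image_of_mem β (projIcc a b hab t).2
  refine ⟨C, hC, fun s hs s' hs' t ht => ?_⟩
  have heq := IccExtend_domRestrict_eventuallyEq hab β ht
  rw [← genSpeed_congr heq, ← genSpeed_congr heq]
  exact hle s hs s' hs' t

theorem CurveIn.aemeasurable_genSpeed (hγ : CurveIn I d α β a b) (hd : IsMetricFamily I d)
    (hL : CondL I d) :
    AEMeasurable (fun t => genSpeed d β (α t) t) (volume.restrict (Ioo a b)) := by
  obtain ⟨hab, hα, hβ, hαI⟩ := hγ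
  have hαc := hα.continuousOn_rdist
  have hJI : α '' Icc a b ⊆ I := image_subset_iff.2 hαI
  have hmeas := hL.measurable_genSpeed_comp hd hJI (isCompact_Icc.image_of_continuousOn hαc)
    (isCompact_Icc.image_of_continuousOn
      (hd.continuousOn (hαI a (left_mem_Icc.2 hab.le)) (hβ _ (hαI a (left_mem_Icc.2 hab.le)))))
    (fun s hs => (hβ s (hJI hs)).IccExtend hab.le)
    (fun t => mem_image_of_mem β (projIcc a b hab.le t).2)
    (hαc.domRestrict.Icc_extend' (h := hab.le)).measurable
    fun t => mem_image_of_mem α (projIcc a b hab.le t).2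
  refine ⟨_, hmeas, (ae_restrict_iff' measurableSet_Ioo).2 (.of_forall fun t ht => ?_)⟩
  simp only [genSpeed_congr (IccExtend_domRestrict_eventuallyEq hab.le β ht),
    IccExtend_of_mem _ _ (Ioo_subset_Icc_self ht), domRestrict_apply]

theorem CondH.exists_le_exp_mul (hH : CondH I h) (hpos : ∀ s ∈ I, ∀ x, 0 < h s x)
    (hcont : ContinuousOn (fun z : ℝ × X => h z.1 z.2) (I ×ˢ univ)) (hJI : J ⊆ I)
    (hJ : IsCompact J) {K : Set X} (hK : IsCompact K) :
    ∃ C > 0, ∀ s ∈ J, ∀ s' ∈ J, ∀ x ∈ K, h s x ≤ Real.exp (C * |s - s'|) * h s' x := by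
  obtain ⟨C, hC, hlip⟩ := hH J K hJI hJ hK
  obtain ⟨m, hm, hmin⟩ := (hJ.prod hK).exists_forall_le'
    (hcont.mono (prod_mono hJI (subset_univ K))) fun z hz => hpos z.1 (hJI hz.1) z.2
  refine ⟨C / m, div_pos hC hm, fun s hs s' hs' x hx => ?_⟩
  have hmx : m ≤ h s' x := hmin (s', x) ⟨hs', hx⟩
  calc h s x ≤ h s' x + C * |s - s'| := by
        linarith [(le_abs_self _).trans (hlip s hs s' hs' x hx)]
    _ = h s' x + C / m * |s - s'| * m := by field_simp
    _ ≤ h s' x + C / m * |s - s'| * h s' x := by gcongr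
    _ = (C / m * |s - s'| + 1) * h s' x := by ring
    _ ≤ Real.exp (C / m * |s - s'|) * h s' x :=
        mul_le_mul_of_nonneg_right (Real.add_one_le_exp _) (hm.le.trans hmx)

-- The opening `v_β(s, t) / h(s, β t)` of the light cones, with the denominators cleared.
theorem exists_genSpeed_mul_le_exp_mul (hd : IsMetricFamily I d) (hL : CondL I d)
    (hH : CondH I h) (hpos : ∀ s ∈ I, ∀ x, 0 < h s x)
    (hcont : ContinuousOn (fun z : ℝ × X => h z.1 z.2) (I ×ˢ univ)) (hJI : J ⊆ I)
    (hJ : IsCompact J) (hab : a ≤ b) (hβ : ∀ s ∈ J, ACOn (d s) β a b)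
    (hβc : ContinuousOn β (Icc a b)) :
    ∃ L > 0, ∀ s ∈ J, ∀ s' ∈ J, ∀ t ∈ Ioo a b,
      genSpeed d β s t * h s' (β t) ≤
        Real.exp (L * |s - s'|) * (genSpeed d β s' t * h s (β t)) := by
  obtain ⟨C, hC, hCle⟩ := hL.exists_genSpeed_le_exp_mul hd hJI hJ hab hβ hβc
  obtain ⟨D, hD, hDle⟩ :=
    hH.exists_le_exp_mul hpos hcont hJI hJ (isCompact_Icc.image_of_continuousOn hβc)
  refine ⟨C + D, add_pos hC hD, fun s hs s' hs' t ht => ?_⟩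
  calc genSpeed d β s t * h s' (β t)
      ≤ (Real.exp (C * |s - s'|) * genSpeed d β s' t) *
          (Real.exp (D * |s' - s|) * h s (β t)) :=
        mul_le_mul (hCle s hs s' hs' t ht)
          (hDle s' hs' s hs _ (mem_image_of_mem β (Ioo_subset_Icc_self ht)))
          (hpos s' (hJI hs') _).le
          (mul_nonneg (Real.exp_pos _).le (genSpeed_nonneg (hd.nonneg (hJI hs')) β t))
    _ = Real.exp ((C + D) * |s - s'|) * (genSpeed d β s' t * h s (β t)) := by
        rw [abs_sub_comm s' s, add_mul, Real.exp_add]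
        ring

end ConeDistortion

section ExpShift

/-- The translation `s ↦ s + y` of the real line, to first order in `y` at `s = 0`, carried out in
the coordinate `-e^{-κ s} / κ`: it moves `u = e^{-κ s}` to `u - κ y`. Along a time coordinate it
multiplies speeds by the exponential of `κ` times the displacement, which is what compensates a
log-Lipschitz variation of the light cones. It has a meaning only if `κ ≠ 0` and
`κ y < e^{-κ s}`. -/
noncomputable def expShift (κ s y : ℝ) : ℝ := -Real.log (Real.exp (-(κ * s)) - κ * y) / κ

variable {κ s y : ℝ}

theorem exp_neg_mul_expShift (hκ : κ ≠ 0) (hy : κ * y < Real.exp (-(κ * s))) :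
    Real.exp (-(κ * expShift κ s y)) = Real.exp (-(κ * s)) - κ * y := by
  rw [expShift, mul_div_cancel₀ _ hκ, neg_neg, Real.exp_log (sub_pos.2 hy)]

theorem expShift_zero (hκ : κ ≠ 0) (s : ℝ) : expShift κ s 0 = s := by
  rw [expShift, mul_zero, sub_zero, Real.log_exp, neg_neg, mul_div_cancel_left₀ _ hκ]

theorem abs_mul_abs_expShift_sub (hκ : κ ≠ 0) (hy : κ * y < Real.exp (-(κ * s)))
    (hκy : 0 ≤ κ * y) : |κ| * |expShift κ s y - s| = κ * (expShift κ s y - s) := by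
  have hle : -(κ * expShift κ s y) ≤ -(κ * s) := by
    rw [← Real.exp_le_exp, exp_neg_mul_expShift hκ hy]
    exact sub_le_self _ hκy
  rw [← abs_mul, abs_of_nonneg (by linarith)]

theorem continuousAt_uncurry_expShift (hy : κ * y < Real.exp (-(κ * s))) :
    ContinuousAt (fun z : ℝ × ℝ => expShift κ z.1 z.2) (s, y) :=
  ((ContinuousAt.log (f := fun z : ℝ × ℝ => Real.exp (-(κ * z.1)) - κ * z.2) (by fun_prop)
    (sub_pos.2 hy).ne').neg).div_const κ

theorem hasDerivAt_expShift {α F : ℝ → ℝ} {t α' F' : ℝ} (hκ : κ ≠ 0) (hα : HasDerivAt α α' t)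
    (hF : HasDerivAt F F' t) (ht : κ * F t < Real.exp (-(κ * α t))) :
    HasDerivAt (fun u => expShift κ (α u) (F u))
      (Real.exp (κ * (expShift κ (α t) (F t) - α t)) * (α' + F' * Real.exp (κ * α t))) t := by
  have hu : HasDerivAt (fun u => Real.exp (-(κ * α u)) - κ * F u)
      (Real.exp (-(κ * α t)) * -(κ * α') - κ * F') t :=
    ((hα.const_mul κ).neg.exp).sub (hF.const_mul κ)
  have hne := (sub_pos.2 ht).ne'
  refine ((hu.log hne).neg.div_const κ).congr_deriv ?_
  have hexp : Real.exp (κ * (expShift κ (α t) (F t) - α t)) =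
      Real.exp (-(κ * α t)) / (Real.exp (-(κ * α t)) - κ * F t) := by
    rw [← exp_neg_mul_expShift hκ ht, ← Real.exp_sub]
    ring_nf
  rw [hexp, ← inv_inv (Real.exp (κ * α t)), ← Real.exp_neg]
  field_simp
  ring

theorem ACOn.expShift {α F : ℝ → ℝ} {a b : ℝ} (hα : ACOn rdist α a b) (hF : ACOn rdist F a b)
    (hF_lt : ∀ t ∈ Icc a b, κ * F t < Real.exp (-(κ * α t))) :
    ACOn rdist (fun t => expShift κ (α t) (F t)) a b := by
  have hexp : ACOn rdist (fun t => Real.exp (-(κ * α t)) - κ * F t) a b :=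
    (hα.comp_contDiffOn (φ := fun s => Real.exp (-(κ * s))) (by fun_prop)).sub
      (hF.comp_contDiffOn (φ := fun y => κ * y) (by fun_prop))
  refine hexp.comp_contDiffOn (φ := fun u => -Real.log u / κ) ?_
  refine ((contDiffOn_id.log ?_).neg).div_const κ
  rintro _ ⟨t, ht, rfl⟩
  exact (sub_pos.2 (hF_lt t ht)).ne'

theorem eventually_forall_expShift_mem {S T U : Set ℝ} (hκ : κ ≠ 0) (hS : IsCompact S)
    (hT : IsCompact T) (hU : IsOpen U) (hSU : S ⊆ U) :
    ∀ᶠ ε in 𝓝 (0 : ℝ), ∀ s ∈ S, ∀ y ∈ T, κ * (ε * y) < Real.exp (-(κ * s)) ∧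
      expShift κ s (ε * y) ∈ U ∧ ε * Real.exp (κ * s) < 1 := by
  suffices ∀ᶠ ε in 𝓝 (0 : ℝ), ∀ z ∈ S ×ˢ T, κ * (ε * z.2) < Real.exp (-(κ * z.1)) ∧
      expShift κ z.1 (ε * z.2) ∈ U ∧ ε * Real.exp (κ * z.1) < 1 from
    this.mono fun ε hε s hs y hy => hε (s, y) ⟨hs, hy⟩
  refine (hS.prod hT).eventually_forall_of_forall_eventually fun ⟨s, y⟩ ⟨hs, _⟩ => ?_
  have hlt : ContinuousAt (fun w : ℝ × ℝ × ℝ => κ * (w.1 * w.2.2) - Real.exp (-(κ * w.2.1)))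
    (0, s, y) := by fun_prop
  have hmem : ContinuousAt (fun w : ℝ × ℝ × ℝ => expShift κ w.2.1 (w.1 * w.2.2)) (0, s, y) :=
    (continuousAt_uncurry_expShift (by simpa using Real.exp_pos _)).comp
      (f := fun w : ℝ × ℝ × ℝ => (w.2.1, w.1 * w.2.2)) (by fun_prop)
  have hone : ContinuousAt (fun w : ℝ × ℝ × ℝ => w.1 * Real.exp (κ * w.2.1)) (0, s, y) := by
    fun_prop
  filter_upwards [hlt.eventually_lt_const (u := 0) (by simp [Real.exp_pos]),
    hmem.eventually_mem (hU.mem_nhds (by simpa [expShift_zero hκ] using hSU hs)),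
    hone.eventually_lt_const (u := 1) (by simp)] with w h₁ h₂ h₃
  exact ⟨sub_neg.1 h₁, h₂, h₃⟩

end ExpShift

section Tilt

/-- The curve `(α, β)` is future directed and becomes timelike when `α'` is replaced by `α' + θ f`
for any `θ ∈ (0, 1)`, the point `(α, β)` at which `v_β` and `h` are evaluated being kept. This is
the first order information needed to deform `(α, β)` into a timelike curve. -/
def TiltedTimelike {X : Type*} (I : Set ℝ) (d : ℝ → X → X → ℝ) (h : ℝ → X → ℝ) (f α : ℝ → ℝ)
    (β : ℝ → X) (a b : ℝ) : Prop :=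
  CurveIn I d α β a b ∧ FutureDirected α a b ∧ ∀ᵐ t, t ∈ Ioo a b → ∀ θ ∈ Ioo (0 : ℝ) 1,
    genSpeed d β (α t) t < h (α t) (β t) * (deriv α t + θ * f t)

theorem exists_measurable_pos_le {Ω : Type*} [MeasurableSpace Ω] {μ : Measure Ω} {D : Ω → ℝ}
    (hD : AEMeasurable D μ) :
    ∃ g : Ω → ℝ, Measurable g ∧ (∀ t, 0 < g t) ∧ (∀ t, g t ≤ 1) ∧
      ∀ᵐ t ∂μ, 0 < D t → g t ≤ D t := by
  classical
  refine ⟨fun t => if 0 < hD.mk D t then min 1 (hD.mk D t) else 1,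
    Measurable.ite (measurableSet_lt measurable_const hD.measurable_mk)
      (measurable_const.min hD.measurable_mk) measurable_const,
    fun t => ?_, fun t => ?_, ?_⟩
  · beta_reduce
    split_ifs with ht
    · exact lt_min one_pos ht
    · exact one_pos
  · beta_reduce
    split_ifs
    · exact min_le_left _ _
    · exact le_rfl
  · filter_upwards [hD.ae_eq_mk] with t ht hpos
    rw [← ht, if_pos hpos]
    exact min_le_right _ _

variable {X : Type*} {I : Set ℝ} {d : ℝ → X → X → ℝ} {h : ℝ → X → ℝ} {f α : ℝ → ℝ}
  {β : ℝ → X} {a b : ℝ}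

theorem CurveIn.comp_add_right (hγ : CurveIn I d α β a b) (k : ℝ) :
    CurveIn I d (fun t => α (t + k)) (fun t => β (t + k)) (a - k) (b - k) :=
  ⟨sub_lt_sub_right hγ.1 k, hγ.2.1.comp_add_right k, fun s hs => (hγ.2.2.1 s hs).comp_add_right k,
    fun t ht => hγ.2.2.2 _ ⟨by linarith [ht.1], by linarith [ht.2]⟩⟩

theorem ae_mem_Ioo_comp_add_right {P : ℝ → Prop} (hP : ∀ᵐ t, t ∈ Ioo a b → P t) (k : ℝ) :
    ∀ᵐ t, t ∈ Ioo (a - k) (b - k) → P (t + k) := by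
  filter_upwards [(measurePreserving_add_right volume k).quasiMeasurePreserving.ae hP] with t ht hm
  exact ht ⟨by linarith [hm.1], by linarith [hm.2]⟩

theorem TiltedTimelike.comp_add_right (hγ : TiltedTimelike I d h f α β a b) (k : ℝ) :
    TiltedTimelike I d h (fun t => f (t + k)) (fun t => α (t + k)) (fun t => β (t + k))
      (a - k) (b - k) := by
  refine ⟨hγ.1.comp_add_right k, ?_, ?_⟩
  · simpa only [FutureDirected, deriv_comp_add_const] using ae_mem_Ioo_comp_add_right hγ.2.1 k
  · simpa only [deriv_comp_add_const, genSpeed_comp_add_right] using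
      ae_mem_Ioo_comp_add_right hγ.2.2 k

theorem CurveIn.piecewise_Iic {m : ℝ} {α₁ α₂ : ℝ → ℝ} {β₁ β₂ : ℝ → X}
    (htri : ∀ s ∈ I, ∀ x y z, d s x z ≤ d s x y + d s y z)
    (h₁ : CurveIn I d α₁ β₁ a m) (h₂ : CurveIn I d α₂ β₂ m b)
    (hα : α₁ m = α₂ m) (hβ : β₁ m = β₂ m) :
    CurveIn I d ((Iic m).piecewise α₁ α₂) ((Iic m).piecewise β₁ β₂) a b := by
  obtain ⟨ham, hα₁, hβ₁, hαI₁⟩ := h₁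
  obtain ⟨hmb, hα₂, hβ₂, hαI₂⟩ := h₂
  refine ⟨ham.trans hmb, hα₁.piecewise_Iic (fun x y z => abs_sub_le x y z) hα₂ ham.le hmb.le hα,
    fun s hs => (hβ₁ s hs).piecewise_Iic (htri s hs) (hβ₂ s hs) ham.le hmb.le hβ, fun t ht => ?_⟩
  rcases le_or_gt t m with htm | hmt
  · rw [piecewise_eq_of_mem (Iic m) _ _ htm]
    exact hαI₁ t ⟨ht.1, htm⟩
  · rw [piecewise_eq_of_notMem (Iic m) _ _ (notMem_Iic.2 hmt)]
    exact hαI₂ t ⟨hmt.le, ht.2⟩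

theorem ae_mem_Ioo_of_ae_mem_Ioo {P : ℝ → Prop} {m : ℝ} (h₁ : ∀ᵐ t, t ∈ Ioo a m → P t)
    (h₂ : ∀ᵐ t, t ∈ Ioo m b → P t) : ∀ᵐ t, t ∈ Ioo a b → P t := by
  filter_upwards [h₁, h₂, compl_mem_ae_iff.2 (measure_singleton m)] with t h₁ h₂ hne ht
  exact (lt_or_gt_of_ne hne).elim (fun htm => h₁ ⟨ht.1, htm⟩) fun hmt => h₂ ⟨hmt, ht.2⟩

theorem TiltedTimelike.piecewise_Iic {m : ℝ} {f₁ f₂ α₁ α₂ : ℝ → ℝ} {β₁ β₂ : ℝ → X}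
    (htri : ∀ s ∈ I, ∀ x y z, d s x z ≤ d s x y + d s y z)
    (h₁ : TiltedTimelike I d h f₁ α₁ β₁ a m) (h₂ : TiltedTimelike I d h f₂ α₂ β₂ m b)
    (hα : α₁ m = α₂ m) (hβ : β₁ m = β₂ m) :
    TiltedTimelike I d h ((Iic m).piecewise f₁ f₂) ((Iic m).piecewise α₁ α₂)
      ((Iic m).piecewise β₁ β₂) a b := by
  refine ⟨h₁.1.piecewise_Iic htri h₂.1 hα hβ, ae_mem_Ioo_of_ae_mem_Ioo (m := m) ?_ ?_,
    ae_mem_Ioo_of_ae_mem_Ioo (m := m) ?_ ?_⟩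
  · filter_upwards [h₁.2.1] with t hα' ht
    rw [(piecewise_Iic_eventuallyEq_left α₁ α₂ ht.2).deriv_eq]
    exact hα' ht
  · filter_upwards [h₂.2.1] with t hα' ht
    rw [(piecewise_Iic_eventuallyEq_right α₁ α₂ ht.1).deriv_eq]
    exact hα' ht
  · filter_upwards [h₁.2.2] with t htilt ht
    have hα := piecewise_Iic_eventuallyEq_left α₁ α₂ ht.2
    have hβ := piecewise_Iic_eventuallyEq_left β₁ β₂ ht.2
    rw [hα.deriv_eq, hα.eq_of_nhds, hβ.eq_of_nhds, genSpeed_congr hβ,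
      (piecewise_Iic_eventuallyEq_left f₁ f₂ ht.2).eq_of_nhds]
    exact htilt ht
  · filter_upwards [h₂.2.2] with t htilt ht
    have hα := piecewise_Iic_eventuallyEq_right α₁ α₂ ht.1
    have hβ := piecewise_Iic_eventuallyEq_right β₁ β₂ ht.1
    rw [hα.deriv_eq, hα.eq_of_nhds, hβ.eq_of_nhds, genSpeed_congr hβ,
      (piecewise_Iic_eventuallyEq_right f₁ f₂ ht.1).eq_of_nhds]
    exact htilt ht

theorem FutureCausal.tiltedTimelike (hγ : FutureCausal I d h α β a b)
    (hpos : ∀ s ∈ I, ∀ x, 0 < h s x) {μ : ℝ} (hμ : 0 < μ) :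
    TiltedTimelike I d h (fun _ => μ) α β a b := by
  refine ⟨hγ.1, hγ.2.1, ?_⟩
  filter_upwards [hγ.2.1, hγ.2.2] with t hα' hcausal ht θ hθ
  have hh := hpos _ (hγ.1.2.2.2 t (Ioo_subset_Icc_self ht)) (β t)
  calc genSpeed d β (α t) t ≤ h (α t) (β t) * deriv α t :=
        le_of_sq_le_sq ((hcausal ht).trans_eq (mul_pow _ _ 2).symm)
          (mul_nonneg hh.le (hα' ht).le)
    _ < h (α t) (β t) * (deriv α t + θ * μ) :=
        mul_lt_mul_of_pos_left (lt_add_of_pos_right _ (mul_pos hθ.1 hμ)) hh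

variable [TopologicalSpace X]

theorem CurveIn.futureTimelike_iff (hγ : CurveIn I d α β a b) (hd : IsMetricFamily I d)
    (hpos : ∀ s ∈ I, ∀ x, 0 < h s x) :
    FutureTimelike I d h α β a b ↔
      ∀ᵐ t, t ∈ Ioo a b → genSpeed d β (α t) t < h (α t) (β t) * deriv α t := by
  have hαI : ∀ t ∈ Ioo a b, α t ∈ I := fun t ht => hγ.2.2.2 t (Ioo_subset_Icc_self ht)
  constructor
  · rintro ⟨-, hdir, htl⟩
    filter_upwards [hdir, htl] with t hα' hlt ht
    refine lt_of_pow_lt_pow_left₀ 2 (mul_pos (hpos _ (hαI t ht) _) (hα' ht)).le ?_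
    rw [mul_pow]
    exact hlt ht
  · intro hlin
    have hv : ∀ t ∈ Ioo a b, 0 ≤ genSpeed d β (α t) t := fun t ht =>
      genSpeed_nonneg (hd.nonneg (hαI t ht)) β t
    refine ⟨hγ, ?_, ?_⟩
    · filter_upwards [hlin] with t hlt ht
      exact pos_of_mul_pos_right ((hv t ht).trans_lt (hlt ht)) (hpos _ (hαI t ht) _).le
    · filter_upwards [hlin] with t hlt ht
      rw [← mul_pow]
      exact pow_lt_pow_left₀ (hlt ht) (hv t ht) two_ne_zero

theorem FutureTimelike.exists_tiltedTimelike_neg (hγ : FutureTimelike I d h α β a b)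
    (hd : IsMetricFamily I d) (hL : CondL I d) (hpos : ∀ s ∈ I, ∀ x, 0 < h s x)
    (hcont : ContinuousOn (fun z : ℝ × X => h z.1 z.2) (I ×ˢ univ)) :
    ∃ g : ℝ → ℝ, IntervalIntegrable g volume a b ∧ (∀ t, 0 < g t) ∧
      TiltedTimelike I d h (fun t => -g t) α β a b := by
  obtain ⟨hab, hα, hβ, hαI⟩ := hγ.1
  have haI := hαI a (left_mem_Icc.2 hab.le)
  have hh : ContinuousOn (fun t => h (α t) (β t)) (Icc a b) :=
    hcont.comp (hα.continuousOn_rdist.prodMk (hd.continuousOn haI (hβ _ haI)))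
      fun t ht => ⟨hαI t ht, mem_univ _⟩
  obtain ⟨g, hgm, hg0, hg1, hgle⟩ := exists_measurable_pos_le
    ((measurable_deriv α).aemeasurable.sub ((hγ.1.aemeasurable_genSpeed hd hL).div
      ((hh.mono Ioo_subset_Icc_self).aemeasurable measurableSet_Ioo)))
  refine ⟨g, intervalIntegrable_const (c := (1 : ℝ)) |>.mono_fun hgm.aestronglyMeasurable
    (.of_forall fun t => ?_), hg0, hγ.1, hγ.2.1, ?_⟩
  · simpa only [Real.norm_of_nonneg (hg0 t).le, norm_one] using hg1 t
  filter_upwards [(hγ.1.futureTimelike_iff hd hpos).1 hγ,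
    (ae_restrict_iff' measurableSet_Ioo).1 hgle] with t hlt hle ht θ hθ
  have hht := hpos _ (hαI t (Ioo_subset_Icc_self ht)) (β t)
  have hslack : g t ≤ deriv α t - genSpeed d β (α t) t / h (α t) (β t) :=
    hle ht (sub_pos.2 ((div_lt_iff₀' hht).2 (hlt ht)))
  have hθg : θ * g t < g t := mul_lt_of_lt_one_left (hg0 t) hθ.2
  rw [← div_lt_iff₀' hht]
  linarith

end Tilt

section Deformation

variable {X : Type*} [TopologicalSpace X] {I J : Set ℝ} {d : ℝ → X → X → ℝ} {h : ℝ → X → ℝ}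
  {f α : ℝ → ℝ} {β : ℝ → X} {a b κ ε : ℝ}

theorem TiltedTimelike.futureTimelike_expShift (hγ : TiltedTimelike I d h f α β a b)
    (hd : IsMetricFamily I d) (hpos : ∀ s ∈ I, ∀ x, 0 < h s x) (hJI : J ⊆ I)
    (hαJ : ∀ t ∈ Icc a b, α t ∈ J) (hf : IntervalIntegrable f volume a b) (hκ : κ ≠ 0)
    (hcone : ∀ s ∈ J, ∀ s' ∈ J, ∀ t ∈ Ioo a b, genSpeed d β s t * h s' (β t) ≤
      Real.exp (|κ| * |s - s'|) * (genSpeed d β s' t * h s (β t)))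
    (hκf : ∀ t ∈ Icc a b, 0 ≤ κ * ∫ r in a..t, f r) (hε : 0 < ε)
    (hεf : ∀ t ∈ Icc a b, κ * (ε * ∫ r in a..t, f r) < Real.exp (-(κ * α t)) ∧
      expShift κ (α t) (ε * ∫ r in a..t, f r) ∈ J ∧ ε * Real.exp (κ * α t) < 1) :
    FutureTimelike I d h (fun t => expShift κ (α t) (ε * ∫ r in a..t, f r)) β a b := by
  obtain ⟨⟨hab, hα, hβ, -⟩, hdir, htilt⟩ := hγ
  have hF : ACOn rdist (fun t => ε * ∫ r in a..t, f r) a b :=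
    (acOn_rdist_integral hf hab.le).comp_contDiffOn (φ := fun y => ε * y) (by fun_prop)
  have hcurve : CurveIn I d (fun t => expShift κ (α t) (ε * ∫ r in a..t, f r)) β a b :=
    ⟨hab, hα.expShift hF fun t ht => (hεf t ht).1, hβ, fun t ht => hJI (hεf t ht).2.1⟩
  refine (hcurve.futureTimelike_iff hd hpos).2 ?_
  filter_upwards [hdir, htilt, hf.ae_hasDerivAt_integral] with t hα' htilt hF' ht
  have htI := Ioo_subset_Icc_self ht
  obtain ⟨hlt, hmem, hone⟩ := hεf t htI
  have hderiv := hasDerivAt_expShift hκ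
    (differentiableAt_of_deriv_ne_zero (hα' ht).ne').hasDerivAt
    ((hF' (Icc_subset_uIcc htI) a left_mem_uIcc).const_mul ε) hlt
  have hκε : 0 ≤ κ * (ε * ∫ r in a..t, f r) := by
    rw [mul_left_comm]
    exact mul_nonneg hε.le (hκf t htI)
  rw [hderiv.deriv]
  set s := expShift κ (α t) (ε * ∫ r in a..t, f r)
  have hhα := hpos _ (hJI (hαJ t htI)) (β t)
  have hhs := hpos s (hJI hmem) (β t)
  refine lt_of_mul_lt_mul_right ?_ hhα.le
  calc genSpeed d β s t * h (α t) (β t)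
      ≤ Real.exp (κ * (s - α t)) * (genSpeed d β (α t) t * h s (β t)) := by
        rw [← abs_mul_abs_expShift_sub hκ hlt hκε]
        exact hcone s hmem _ (hαJ t htI) t ht
    _ < Real.exp (κ * (s - α t)) *
          (h (α t) (β t) * (deriv α t + ε * Real.exp (κ * α t) * f t) * h s (β t)) := by
        have := htilt ht _ ⟨mul_pos hε (Real.exp_pos _), hone⟩
        gcongr
    _ = h s (β t) * (Real.exp (κ * (s - α t)) * (deriv α t + ε * f t * Real.exp (κ * α t))) *
          h (α t) (β t) := by ring

theorem TiltedTimelike.chronRel_endpoints (hγ : TiltedTimelike I d h f α β a b) (hIopen : IsOpen I)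
    (hd : IsMetricFamily I d) (hL : CondL I d) (hH : CondH I h)
    (hpos : ∀ s ∈ I, ∀ x, 0 < h s x)
    (hcont : ContinuousOn (fun z : ℝ × X => h z.1 z.2) (I ×ˢ univ))
    (hf : IntervalIntegrable f volume a b) (hf0 : ∫ r in a..b, f r = 0) {σ : ℝ} (hσ : |σ| = 1)
    (hσf : ∀ t ∈ Icc a b, 0 ≤ σ * ∫ r in a..t, f r) :
    chronRel I d h (α a, β a) (α b, β b) := by
  obtain ⟨hab, hα, hβ, hαI⟩ := hγ.1
  have hαc := hα.continuousOn_rdist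
  have hS : IsCompact (α '' Icc a b) := isCompact_Icc.image_of_continuousOn hαc
  have hT : IsCompact ((fun t => ∫ r in a..t, f r) '' Icc a b) :=
    isCompact_Icc.image_of_continuousOn (acOn_rdist_integral hf hab.le).continuousOn_rdist
  obtain ⟨J, hJ, hSJ, hJI⟩ := exists_compact_between hS hIopen (image_subset_iff.2 hαI)
  have haI := hαI a (left_mem_Icc.2 hab.le)
  obtain ⟨L, hL0, hcone⟩ := exists_genSpeed_mul_le_exp_mul hd hL hH hpos hcont hJI hJ hab.le
    (fun s hs => hβ s (hJI hs)) (hd.continuousOn haI (hβ _ haI))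
  have hκL : |L * σ| = L := by rw [abs_mul, hσ, mul_one, abs_of_pos hL0]
  have hκ : L * σ ≠ 0 := abs_pos.1 (hκL.symm ▸ hL0)
  obtain ⟨ε, hεf, hε⟩ := ((eventually_forall_expShift_mem hκ hS hT isOpen_interior
    hSJ).filter_mono nhdsWithin_le_nhds |>.and self_mem_nhdsWithin :
      ∀ᶠ ε in 𝓝[>] (0 : ℝ), _ ∧ ε ∈ Ioi (0 : ℝ)).exists
  refine ⟨a, b, _, β, hγ.futureTimelike_expShift (κ := L * σ) (ε := ε) hd hpos hJI
    (fun t ht => interior_subset (hSJ (mem_image_of_mem α ht))) hf hκ (by rwa [hκL])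
    (fun t ht => ?_) hε fun t ht => ?_, ?_, rfl, ?_, rfl⟩
  · rw [mul_assoc]
    exact mul_nonneg hL0.le (hσf t ht)
  · exact (hεf _ (mem_image_of_mem α ht) _ (mem_image_of_mem _ ht)).imp_right
      (And.imp_left fun h => interior_subset h)
  · rw [intervalIntegral.integral_same, mul_zero, expShift_zero hκ]
  · rw [hf0, mul_zero, expShift_zero hκ]

theorem integral_nonneg_of_nonneg_of_nonpos {m t : ℝ} (hf : IntervalIntegrable f volume a b)
    (hf0 : ∫ r in a..b, f r = 0) (hnonneg : ∀ r ≤ m, 0 ≤ f r) (hnonpos : ∀ r, m < r → f r ≤ 0)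
    (ht : t ∈ Icc a b) : 0 ≤ ∫ r in a..t, f r := by
  rcases le_or_gt t m with htm | hmt
  · exact intervalIntegral.integral_nonneg ht.1 fun r hr => hnonneg r (hr.2.trans htm)
  · have hsplit := intervalIntegral.integral_add_adjacent_intervals
      (hf.mono_set (uIcc_subset_uIcc_left (Icc_subset_uIcc ht)))
      (hf.mono_set (uIcc_subset_uIcc_right (Icc_subset_uIcc ht)))
    have : 0 ≤ ∫ r in t..b, -f r :=
      intervalIntegral.integral_nonneg ht.2 fun r hr => neg_nonneg.2 (hnonpos r (hmt.trans_le hr.1))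
    rw [intervalIntegral.integral_neg] at this
    linarith

theorem TiltedTimelike.chronRel_concat {m : ℝ} {f₁ f₂ α₁ α₂ : ℝ → ℝ} {β₁ β₂ : ℝ → X}
    (h₁ : TiltedTimelike I d h f₁ α₁ β₁ a m) (h₂ : TiltedTimelike I d h f₂ α₂ β₂ m b)
    (hα : α₁ m = α₂ m) (hβ : β₁ m = β₂ m) (hIopen : IsOpen I)
    (hd : IsMetricFamily I d) (hL : CondL I d) (hH : CondH I h)
    (hpos : ∀ s ∈ I, ∀ x, 0 < h s x)
    (hcont : ContinuousOn (fun z : ℝ × X => h z.1 z.2) (I ×ˢ univ))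
    (hf₁ : IntervalIntegrable f₁ volume a m) (hf₂ : IntervalIntegrable f₂ volume m b)
    (hf : (∫ r in a..m, f₁ r) + ∫ r in m..b, f₂ r = 0) {σ : ℝ} (hσ : |σ| = 1)
    (hσf₁ : ∀ r, 0 ≤ σ * f₁ r) (hσf₂ : ∀ r, σ * f₂ r ≤ 0) :
    chronRel I d h (α₁ a, β₁ a) (α₂ b, β₂ b) := by
  have ham := h₁.1.1
  have hmb := h₂.1.1
  have hint := intervalIntegrable_piecewise_Iic ham.le hmb.le hf₁ hf₂
  have hsum : ∫ r in a..b, (Iic m).piecewise f₁ f₂ r = 0 := by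
    rw [← intervalIntegral.integral_add_adjacent_intervals
      (hint.mono_set (uIcc_subset_uIcc_left (Icc_subset_uIcc ⟨ham.le, hmb.le⟩)))
      (hint.mono_set (uIcc_subset_uIcc_right (Icc_subset_uIcc ⟨ham.le, hmb.le⟩))),
      integral_piecewise_Iic_left _ _ ham.le le_rfl,
      integral_piecewise_Iic_right _ _ le_rfl hmb.le, hf]
  have hsign : ∀ t ∈ Icc a b, 0 ≤ σ * ∫ r in a..t, (Iic m).piecewise f₁ f₂ r := fun t ht => by
    rw [← intervalIntegral.integral_const_mul]
    refine integral_nonneg_of_nonneg_of_nonpos (m := m) (hint.const_mul σ) ?_ (fun r hr => ?_)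
      (fun r hr => ?_) ht
    · rw [intervalIntegral.integral_const_mul, hsum, mul_zero]
    · rw [piecewise_eq_of_mem (Iic m) _ _ hr]
      exact hσf₁ r
    · rw [piecewise_eq_of_notMem (Iic m) _ _ (notMem_Iic.2 hr)]
      exact hσf₂ r
  have hγ := h₁.piecewise_Iic (fun s hs => (hd s hs).2.2.2.1) h₂ hα hβ
  simpa only [piecewise_eq_of_mem (Iic m) _ _ (mem_Iic.2 ham.le),
    piecewise_eq_of_notMem (Iic m) _ _ (notMem_Iic.2 hmb)] using
    hγ.chronRel_endpoints hIopen hd hL hH hpos hcont hint hsum hσ hsign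

theorem TiltedTimelike.chronRel_trans {a₁ b₁ a₂ b₂ : ℝ} {f₁ f₂ α₁ α₂ : ℝ → ℝ} {β₁ β₂ : ℝ → X}
    (h₁ : TiltedTimelike I d h f₁ α₁ β₁ a₁ b₁) (h₂ : TiltedTimelike I d h f₂ α₂ β₂ a₂ b₂)
    (hα : α₁ b₁ = α₂ a₂) (hβ : β₁ b₁ = β₂ a₂) (hIopen : IsOpen I)
    (hd : IsMetricFamily I d) (hL : CondL I d) (hH : CondH I h)
    (hpos : ∀ s ∈ I, ∀ x, 0 < h s x)
    (hcont : ContinuousOn (fun z : ℝ × X => h z.1 z.2) (I ×ˢ univ))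
    (hf₁ : IntervalIntegrable f₁ volume a₁ b₁) (hf₂ : IntervalIntegrable f₂ volume a₂ b₂)
    (hf : (∫ r in a₁..b₁, f₁ r) + ∫ r in a₂..b₂, f₂ r = 0) {σ : ℝ} (hσ : |σ| = 1)
    (hσf₁ : ∀ r, 0 ≤ σ * f₁ r) (hσf₂ : ∀ r, σ * f₂ r ≤ 0) :
    chronRel I d h (α₁ a₁, β₁ a₁) (α₂ b₂, β₂ b₂) := by
  have hshift := h₂.comp_add_right (a₂ - b₁)
  have hfshift := hf₂.comp_add_right (a₂ - b₁)
  rw [sub_sub_cancel] at hshift hfshift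
  simpa only [sub_add_cancel] using
    h₁.chronRel_concat hshift (by rw [add_sub_cancel, hα]) (by rw [add_sub_cancel, hβ]) hIopen hd
      hL hH hpos hcont hf₁ hfshift
      (by rw [intervalIntegral.integral_comp_add_right, add_sub_cancel, sub_add_cancel, hf])
      hσ hσf₁ fun r => hσf₂ _

end Deformation

section PushUp

variable {X : Type*} [TopologicalSpace X] {I : Set ℝ} {d : ℝ → X → X → ℝ} {h : ℝ → X → ℝ}
  {p q r : ℝ × X}

theorem causalRel.trans_chronRel (hpq : causalRel I d h p q) (hqr : chronRel I d h q r)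
    (hIopen : IsOpen I) (hd : IsMetricFamily I d) (hL : CondL I d) (hH : CondH I h)
    (hpos : ∀ s ∈ I, ∀ x, 0 < h s x)
    (hcont : ContinuousOn (fun z : ℝ × X => h z.1 z.2) (I ×ˢ univ)) :
    chronRel I d h p r := by
  obtain ⟨a₁, b₁, α₁, β₁, hγ₁, hp, hp', hq, hq'⟩ := hpq
  obtain ⟨a₂, b₂, α₂, β₂, hγ₂, hqα, hqβ, hr, hr'⟩ := hqr
  obtain ⟨g, hg, hg0, hγg⟩ := hγ₂.exists_tiltedTimelike_neg hd hL hpos hcont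
  have hlen : 0 < b₁ - a₁ := sub_pos.2 hγ₁.1.1
  have hμ : 0 < (∫ t in a₂..b₂, g t) / (b₁ - a₁) :=
    div_pos (intervalIntegral.intervalIntegral_pos_of_pos hg hg0 hγ₂.1.1) hlen
  have hsum : (∫ _ in a₁..b₁, (∫ t in a₂..b₂, g t) / (b₁ - a₁)) + ∫ t in a₂..b₂, -g t = 0 := by
    rw [intervalIntegral.integral_const, intervalIntegral.integral_neg, smul_eq_mul,
      mul_div_cancel₀ _ hlen.ne', add_neg_cancel]
  simpa only [hp, hp', hr, hr'] using
    (hγ₁.tiltedTimelike hpos hμ).chronRel_trans hγg (hq.trans hqα.symm) (hq'.trans hqβ.symm) hIopen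
      hd hL hH hpos hcont intervalIntegrable_const hg.neg hsum (σ := 1) abs_one
      (fun _ => by linarith) fun t => by linarith [hg0 t]

theorem chronRel.trans_causalRel (hpq : chronRel I d h p q) (hqr : causalRel I d h q r)
    (hIopen : IsOpen I) (hd : IsMetricFamily I d) (hL : CondL I d) (hH : CondH I h)
    (hpos : ∀ s ∈ I, ∀ x, 0 < h s x)
    (hcont : ContinuousOn (fun z : ℝ × X => h z.1 z.2) (I ×ˢ univ)) :
    chronRel I d h p r := by
  obtain ⟨a₁, b₁, α₁, β₁, hγ₁, hp, hp', hq, hq'⟩ := hpq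
  obtain ⟨a₂, b₂, α₂, β₂, hγ₂, hqα, hqβ, hr, hr'⟩ := hqr
  obtain ⟨g, hg, hg0, hγg⟩ := hγ₁.exists_tiltedTimelike_neg hd hL hpos hcont
  have hlen : 0 < b₂ - a₂ := sub_pos.2 hγ₂.1.1
  have hμ : 0 < (∫ t in a₁..b₁, g t) / (b₂ - a₂) :=
    div_pos (intervalIntegral.intervalIntegral_pos_of_pos hg hg0 hγ₁.1.1) hlen
  have hsum : (∫ t in a₁..b₁, -g t) + ∫ _ in a₂..b₂, (∫ t in a₁..b₁, g t) / (b₂ - a₂) = 0 := by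
    rw [intervalIntegral.integral_const, intervalIntegral.integral_neg, smul_eq_mul,
      mul_div_cancel₀ _ hlen.ne', neg_add_cancel]
  simpa only [hp, hp', hr, hr'] using
    hγg.chronRel_trans (hγ₂.tiltedTimelike hpos hμ) (hq.trans hqα.symm) (hq'.trans hqβ.symm) hIopen
      hd hL hH hpos hcont hg.neg intervalIntegrable_const hsum (σ := -1)
      (by rw [abs_neg, abs_one]) (fun t => by linarith [hg0 t]) fun _ => by linarith

end PushUp

theorem pushup_of_condL_condH_general {X : Type*} [TopologicalSpace X] {I : Set ℝ}
    (hIopen : IsOpen I) {d : ℝ → X → X → ℝ} (hd : IsMetricFamily I d) (hL : CondL I d)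
    {h : ℝ → X → ℝ} (hpos : ∀ s ∈ I, ∀ x, 0 < h s x)
    (hcont : ContinuousOn (fun z : ℝ × X => h z.1 z.2) (I ×ˢ univ)) (hH : CondH I h)
    {p q r : ℝ × X} (hpq : (causalRel I d h p q ∧ chronRel I d h q r) ∨
      (chronRel I d h p q ∧ causalRel I d h q r)) :
    chronRel I d h p r :=
  hpq.elim (fun ⟨hpq, hqr⟩ => hpq.trans_chronRel hqr hIopen hd hL hH hpos hcont)
    fun ⟨hpq, hqr⟩ => hpq.trans_causalRel hqr hIopen hd hL hH hpos hcont

/-- **Push-up property** (Theorem 1.3): under the local log-Lipschitz condition (L)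
on the family of metrics and the time-Lipschitz condition (H) on `h`, the
generalized Lorentzian product `hI ×_F X` satisfies push-up. -/
theorem pushup_of_condL_condH {X : Type*} [TopologicalSpace X] [LocallyCompactSpace X]
    (I : Set ℝ) (hIopen : IsOpen I) (hIord : I.OrdConnected) (hIne : I.Nonempty)
    (d : ℝ → X → X → ℝ) (hd : IsMetricFamily I d) (hdC : CondC I d) (hdL : CondL I d)
    (h : ℝ → X → ℝ) (hpos : ∀ s ∈ I, ∀ x : X, 0 < h s x)
    (hcont : ContinuousOn (fun z : ℝ × X => h z.1 z.2) (I ×ˢ (Set.univ : Set X)))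
    (hH : CondH I h)
    (p q r : ℝ × X)
    (hpq : (causalRel I d h p q ∧ chronRel I d h q r) ∨
           (chronRel I d h p q ∧ causalRel I d h q r)) :
    chronRel I d h p r :=
  pushup_of_condL_condH_general hIopen hd hdL hpos hcont hH hpq
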